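/- arXiv:1108.0810 — 10 statements merged into one kernel-verified Lean document; each statement's English description precedes it below -/
import Mathlib

section
/- Let (V, ≤) be a finite partially ordered set with n = |V| elements, and let 𝓜 be a collection of pairwise disjoint two-element subsets {u, v} of V such that u < v (i.e., a matching in the comparability graph of (V, ≤)). Then the number of downward closed subsets of V is at most 2^(n − 2|𝓜|) · 3^(|𝓜|). -/
/-!
Restrict a family of sets to pieces covering the ground set: a member is determined by its
traces on the pieces, so the size of the family is at most the product of the numbers of traces.
Lower sets leave nested traces on a chain `C`, hence at most `#C + 1` of them, which is `3` for
a matching edge; the points outside all the chains contribute a factor `2` each.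
-/

section Traces

variable {α ι : Type*}

/-- The trace of a family of sets `𝒜` on a finite set `P`: all intersections `X ∩ P` with
`X ∈ 𝒜`. They are kept as subsets of the ambient type, so that traces on different sets `P` can
be compared. -/
def traces (𝒜 : Set (Set α)) (P : Finset α) : Set (Set α) :=
  (fun X ↦ X ∩ P) '' 𝒜

theorem traces_subset_powerset (𝒜 : Set (Set α)) (P : Finset α) :
    traces 𝒜 P ⊆ 𝒫 (P : Set α) := by
  rintro _ ⟨X, -, rfl⟩
  exact Set.inter_subset_right

theorem finite_traces (𝒜 : Set (Set α)) (P : Finset α) : (traces 𝒜 P).Finite :=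
  P.finite_toSet.powerset.subset (traces_subset_powerset 𝒜 P)

theorem ncard_traces_le_two_pow (𝒜 : Set (Set α)) (P : Finset α) :
    (traces 𝒜 P).ncard ≤ 2 ^ P.card := by
  rw [← Set.ncard_coe_finset P, ← Set.ncard_powerset _ P.finite_toSet]
  exact Set.ncard_le_ncard (traces_subset_powerset 𝒜 P) P.finite_toSet.powerset

theorem traces_univ [Fintype α] (𝒜 : Set (Set α)) : traces 𝒜 Finset.univ = 𝒜 := by
  simp [traces]

theorem ncard_traces_union_le [DecidableEq α] (𝒜 : Set (Set α)) (P Q : Finset α) :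
    (traces 𝒜 (P ∪ Q)).ncard ≤ (traces 𝒜 P).ncard * (traces 𝒜 Q).ncard := by
  rw [← Set.ncard_prod]
  refine Set.ncard_le_ncard_of_injOn (fun Y ↦ (Y ∩ P, Y ∩ Q)) ?_ ?_
    ((finite_traces 𝒜 P).prod (finite_traces 𝒜 Q))
  · rintro _ ⟨X, hX, rfl⟩
    exact ⟨⟨X, hX, by grind⟩, ⟨X, hX, by grind⟩⟩
  · intro Y hY Z hZ hYZ
    obtain ⟨hP, hQ⟩ := Prod.mk.inj hYZ
    have hY_sub := traces_subset_powerset 𝒜 _ hY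
    have hZ_sub := traces_subset_powerset 𝒜 _ hZ
    rw [Set.mem_powerset_iff, Finset.coe_union] at hY_sub hZ_sub
    rw [← Set.inter_eq_left.2 hY_sub, ← Set.inter_eq_left.2 hZ_sub, Set.inter_union_distrib_left,
      Set.inter_union_distrib_left, hP, hQ]

theorem ncard_traces_biUnion_le [DecidableEq α] (𝒜 : Set (Set α)) (s : Finset ι)
    (P : ι → Finset α) :
    (traces 𝒜 (s.biUnion P)).ncard ≤ ∏ i ∈ s, (traces 𝒜 (P i)).ncard := by
  classical
  induction s using Finset.induction_on with
  | empty => simpa using ncard_traces_le_two_pow 𝒜 ∅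
  | insert i s hi ih =>
    rw [Finset.biUnion_insert, Finset.prod_insert hi]
    exact (ncard_traces_union_le 𝒜 _ _).trans (Nat.mul_le_mul_left _ ih)

theorem ncard_le_two_pow_mul_prod_ncard_traces [Fintype α] [DecidableEq α] (𝒜 : Set (Set α))
    (s : Finset ι) (P : ι → Finset α) :
    𝒜.ncard ≤ 2 ^ (s.biUnion P)ᶜ.card * ∏ i ∈ s, (traces 𝒜 (P i)).ncard :=
  calc 𝒜.ncard = (traces 𝒜 ((s.biUnion P)ᶜ ∪ s.biUnion P)).ncard := by
        rw [Finset.union_comm, Finset.union_compl, traces_univ]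
    _ ≤ (traces 𝒜 (s.biUnion P)ᶜ).ncard * (traces 𝒜 (s.biUnion P)).ncard :=
        ncard_traces_union_le 𝒜 _ _
    _ ≤ 2 ^ (s.biUnion P)ᶜ.card * ∏ i ∈ s, (traces 𝒜 (P i)).ncard :=
        Nat.mul_le_mul (ncard_traces_le_two_pow 𝒜 _) (ncard_traces_biUnion_le 𝒜 s P)

end Traces

section Chains

variable {α ι : Type*}

theorem ncard_le_card_add_one_of_isChain_subset {𝒜 : Set (Set α)} {P : Finset α}
    (h𝒜 : IsChain (· ⊆ ·) 𝒜) (hP : 𝒜 ⊆ 𝒫 (P : Set α)) : 𝒜.ncard ≤ P.card + 1 := by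
  have hfin : ∀ X ∈ 𝒜, X.Finite := fun X hX ↦ P.finite_toSet.subset (hP hX)
  have hmaps : ∀ X ∈ 𝒜, X.ncard ∈ (Finset.range (P.card + 1) : Set ℕ) := fun X hX ↦ by
    have hle := Set.ncard_le_ncard (hP hX) P.finite_toSet
    rw [Set.ncard_coe_finset] at hle
    simpa [Nat.lt_succ_iff] using hle
  have hinj : Set.InjOn Set.ncard 𝒜 := fun X hX Y hY hXY ↦ by
    rcases h𝒜.total hX hY with h | h
    · exact Set.eq_of_subset_of_ncard_le h hXY.ge (hfin Y hY)
    · exact (Set.eq_of_subset_of_ncard_le h hXY.le (hfin X hX)).symm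
  simpa only [Set.ncard_coe_finset, Finset.card_range] using
    Set.ncard_le_ncard_of_injOn Set.ncard hmaps hinj (Finset.finite_toSet _)

theorem isChain_traces_isLowerSet [LE α] {C : Finset α} (hC : IsChain (· ≤ ·) (C : Set α)) :
    IsChain (· ⊆ ·) (traces {X : Set α | IsLowerSet X} C) := by
  rintro _ ⟨X, hX, rfl⟩ _ ⟨Y, hY, rfl⟩ -
  by_contra! h
  obtain ⟨⟨x, ⟨hxX, hxC⟩, hxY⟩, ⟨y, ⟨hyY, hyC⟩, hyX⟩⟩ := h.imp Set.not_subset.1 Set.not_subset.1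
  have hxy : x ≠ y := fun hxy ↦ hxY ⟨hxy ▸ hyY, hxC⟩
  rcases hC hxC hyC hxy with hle | hle
  · exact hxY ⟨hY hle hyY, hxC⟩
  · exact hyX ⟨hX hle hxX, hyC⟩

theorem ncard_traces_isLowerSet_le [LE α] {C : Finset α} (hC : IsChain (· ≤ ·) (C : Set α)) :
    (traces {X : Set α | IsLowerSet X} C).ncard ≤ C.card + 1 :=
  ncard_le_card_add_one_of_isChain_subset (isChain_traces_isLowerSet hC)
    (traces_subset_powerset _ _)

theorem num_downward_closed_le_general [Fintype α] [LE α] (s : Finset ι) (C : ι → Finset α)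
    (hchain : ∀ i ∈ s, IsChain (· ≤ ·) (C i : Set α))
    (hdisj : (s : Set ι).PairwiseDisjoint C) :
    {X : Set α | IsLowerSet X}.ncard ≤
      2 ^ (Fintype.card α - ∑ i ∈ s, (C i).card) * ∏ i ∈ s, ((C i).card + 1) := by
  classical
  calc {X : Set α | IsLowerSet X}.ncard
      ≤ 2 ^ (s.biUnion C)ᶜ.card * ∏ i ∈ s, (traces {X : Set α | IsLowerSet X} (C i)).ncard :=
        ncard_le_two_pow_mul_prod_ncard_traces _ s C
    _ ≤ 2 ^ (s.biUnion C)ᶜ.card * ∏ i ∈ s, ((C i).card + 1) :=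
        Nat.mul_le_mul_left _ <|
          Finset.prod_le_prod' fun i hi ↦ ncard_traces_isLowerSet_le (hchain i hi)
    _ = 2 ^ (Fintype.card α - ∑ i ∈ s, (C i).card) * ∏ i ∈ s, ((C i).card + 1) := by
        rw [Finset.card_compl, Finset.card_biUnion hdisj]

end Chains

/-- Let `(V, ≤)` be a finite poset with `n = |V|` elements and `𝓜` a
collection of pairwise disjoint two-element subsets `{u, v}` of `V` with `u < v`
(a matching in the comparability graph). Then the number of downward closed subsets
of `V` is at most `2^(n − 2|𝓜|) · 3^(|𝓜|)`. -/
theorem num_downward_closed_le {V : Type*} [Fintype V] [PartialOrder V] [DecidableEq V]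
    (n : ℕ) (hn : n = Fintype.card V)
    (𝓜 : Finset (Finset V))
    (hedge : ∀ e ∈ 𝓜, ∃ u v : V, u < v ∧ e = {u, v})
    (hdisj : (𝓜 : Set (Finset V)).Pairwise (fun e f => Disjoint e f)) :
    {X : Set V | ∀ v ∈ X, ∀ u : V, u < v → u ∈ X}.ncard ≤
      2 ^ (n - 2 * 𝓜.card) * 3 ^ 𝓜.card := by
  have hcard : ∀ e ∈ 𝓜, e.card = 2 := fun e he ↦ by
    obtain ⟨u, v, huv, rfl⟩ := hedge e he
    exact Finset.card_pair huv.ne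
  have hchain : ∀ e ∈ 𝓜, IsChain (· ≤ ·) (e : Set V) := fun e he ↦ by
    obtain ⟨u, v, huv, rfl⟩ := hedge e he
    simpa only [Finset.coe_pair] using IsChain.pair huv.le
  have hsum : ∑ e ∈ 𝓜, e.card = 2 * 𝓜.card := by
    rw [Finset.sum_const_nat hcard, mul_comm]
  have hprod : ∏ e ∈ 𝓜, (e.card + 1) = 3 ^ 𝓜.card :=
    Finset.prod_eq_pow_card fun e he ↦ by rw [hcard e he]
  have hlower : {X : Set V | ∀ v ∈ X, ∀ u, u < v → u ∈ X} = {X | IsLowerSet X} := by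
    ext X
    exact ⟨fun hX ↦ isLowerSet_iff_forall_lt.2 fun v u huv hv ↦ hX v hv u huv,
      fun hX _ hv _ huv ↦ hX huv.le hv⟩
  simpa only [hlower, hsum, hprod, ← hn, id] using
    num_downward_closed_le_general 𝓜 id hchain hdisj
end

section
/- Let (V, ≤) be a finite partially ordered set with n = |V| jobs, let t : V → ℝ be an injective (pairwise distinct) nonnegative processing-time function, and let σ_opt be an ordering minimizing the total completion time T among all orderings. Let K ⊆ V be an antichain (no two distinct elements of K are comparable) such that every u ∈ K has succ(u) ≠ ∅, and assume that for all v ∈ K and all x ∈ pred(K) we have σ_opt(v) > σ_opt(x). Then for every i with 1 ≤ i ≤ n, the set K ∩ σ_opt⁻¹({1, …, i}) is non-succ-exchangeable with respect to K. -/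
/-- The set of predecessors of a job: `pred(v) = {x : x < v}`. -/
def predSet {V : Type*} [PartialOrder V] (v : V) : Set V := {x | x < v}

/-- The set of successors of a job: `succ(v) = {x : v < x}`. -/
def succSet {V : Type*} [PartialOrder V] (v : V) : Set V := {x | v < x}

/-- `pred(U) = ⋃_{v ∈ U} pred(v)`. -/
def predSets {V : Type*} [PartialOrder V] (U : Set V) : Set V := ⋃ v ∈ U, predSet v

/-- `L ⊆ K` is succ-exchangeable with respect to `K` if there exists `u ∈ L` such that
for every `w ∈ succ(u)` there is `v_w ∈ (K ∩ pred(w)) \ L` with `t(v_w) < t(u)`. -/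
def SuccExchangeable {V : Type*} [PartialOrder V] (t : V → ℝ) (K L : Set V) : Prop :=
  ∃ u ∈ L, ∀ w ∈ succSet u, ∃ vw ∈ (K ∩ predSet w) \ L, t vw < t u

/-- Total completion time `T(σ) = Σ_{v ∈ V} (n − σ(v) + 1) · t(v)`, where the bijection
`σ : V ≃ Fin n` gives job `v` the (1-indexed) position `(σ v : ℕ) + 1`. -/
noncomputable def TotalCost {V : Type*} [Fintype V] (n : ℕ) (t : V → ℝ)
    (σ : V ≃ Fin n) : ℝ :=
  ∑ v : V, ((n : ℝ) - ((σ v : ℕ) : ℝ)) * t v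

/-!
Suppose `u` witnesses that the prefix `L` of `K` is succ-exchangeable, and let `w` be the earliest
successor of `u` in `σ_opt`. It provides some `v ∈ K` outside `L` with `v < w` and `t v < t u`,
and `v` is scheduled after `u` because `L` is a prefix of `K`. Exchanging `u` and `v` gives a
strictly cheaper schedule. It still respects the order: `u` moves to the position of `v`,
which precedes `w` and hence every successor of `u`, while `v` moves to the position of `u`, which
follows every predecessor of `K`.
-/

theorem strictMono_comp_swap {α β : Type*} [Preorder α] [DecidableEq α] [Preorder β] {f : α → β}
    (hf : StrictMono f) {u v : α} (huv : f u ≤ f v) (hsucc : ∀ y, u < y → f v < f y)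
    (hpred : ∀ x, x < v → f x < f u) : StrictMono (f ∘ Equiv.swap u v) := by
  have hnot_lt : ¬ u < v := fun h => (hsucc v h).false
  have hnot_gt : ¬ v < u := fun h => (huv.trans_lt (hf h)).false
  intro x y hxy
  change f (Equiv.swap u v x) < f (Equiv.swap u v y)
  rcases eq_or_ne x u with rfl | hxu
  · have hyv : y ≠ v := fun h => hnot_lt (h ▸ hxy)
    rw [Equiv.swap_apply_left, Equiv.swap_apply_of_ne_of_ne hxy.ne' hyv]
    exact hsucc y hxy
  rcases eq_or_ne x v with rfl | hxv
  · have hyu : y ≠ u := fun h => hnot_gt (h ▸ hxy)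
    rw [Equiv.swap_apply_right, Equiv.swap_apply_of_ne_of_ne hyu hxy.ne']
    exact huv.trans_lt (hf hxy)
  rw [Equiv.swap_apply_of_ne_of_ne hxu hxv]
  rcases eq_or_ne y u with rfl | hyu
  · rw [Equiv.swap_apply_left]
    exact (hf hxy).trans_le huv
  rcases eq_or_ne y v with rfl | hyv
  · rw [Equiv.swap_apply_right]
    exact hpred x hxy
  rw [Equiv.swap_apply_of_ne_of_ne hyu hyv]
  exact hf hxy

section TotalCost

variable {V : Type*} [Fintype V] {n : ℕ} {t : V → ℝ} {σ : V ≃ Fin n} {u v : V}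

theorem totalCost_swap_trans_sub [DecidableEq V] (t : V → ℝ) (σ : V ≃ Fin n) (u v : V) :
    TotalCost n t ((Equiv.swap u v).trans σ) - TotalCost n t σ =
      (((σ v : ℕ) : ℝ) - ((σ u : ℕ) : ℝ)) * (t v - t u) := by
  obtain rfl | huv := eq_or_ne u v
  · simp
  unfold TotalCost
  rw [← Finset.sum_sub_distrib, Fintype.sum_eq_add u v huv]
  · simp only [Equiv.trans_apply, Equiv.swap_apply_left, Equiv.swap_apply_right]
    ring
  · rintro x ⟨hxu, hxv⟩
    rw [Equiv.trans_apply, Equiv.swap_apply_of_ne_of_ne hxu hxv, sub_self]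

theorem totalCost_swap_trans_lt [DecidableEq V] (hσ : σ u < σ v) (ht : t v < t u) :
    TotalCost n t ((Equiv.swap u v).trans σ) < TotalCost n t σ := by
  have hσ' : ((σ u : ℕ) : ℝ) < ((σ v : ℕ) : ℝ) := Nat.cast_lt.2 hσ
  rw [← sub_neg, totalCost_swap_trans_sub]
  exact mul_neg_of_pos_of_neg (sub_pos.2 hσ') (sub_neg.2 ht)

theorem le_of_forall_totalCost_le [Preorder V] (hσ : StrictMono σ)
    (hopt : ∀ τ : V ≃ Fin n, StrictMono τ → TotalCost n t σ ≤ TotalCost n t τ)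
    (huv : σ u < σ v) (hsucc : ∀ y, u < y → σ v < σ y) (hpred : ∀ x, x < v → σ x < σ u) :
    t u ≤ t v := by
  classical
  by_contra! ht
  have hswap : StrictMono ((Equiv.swap u v).trans σ) :=
    strictMono_comp_swap hσ huv.le hsucc hpred
  exact (totalCost_swap_trans_lt huv ht).not_ge (hopt _ hswap)

end TotalCost

theorem prefix_non_succ_exchangeable_general {V : Type*} [Fintype V] [PartialOrder V]
    {n : ℕ} {t : V → ℝ} {σopt : V ≃ Fin n} (hord : StrictMono σopt)
    (hopt : ∀ σ : V ≃ Fin n, StrictMono σ → TotalCost n t σopt ≤ TotalCost n t σ)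
    {K : Set V} (hsucc : ∀ u ∈ K, (succSet u).Nonempty)
    (hpred : ∀ v ∈ K, ∀ x ∈ predSets K, σopt x < σopt v) (i : ℕ) :
    ¬ SuccExchangeable t K (K ∩ {v : V | (σopt v : ℕ) + 1 ≤ i}) := by
  rintro ⟨u, ⟨huK, hui⟩, hexch⟩
  obtain ⟨w, huw, hw_first⟩ := (succSet u).exists_min_image σopt (Set.toFinite _) (hsucc u huK)
  obtain ⟨v, ⟨⟨hvK, hvw⟩, hvL⟩, htvu⟩ := hexch w huw
  have huv : σopt u < σopt v :=
    lt_of_not_ge fun hvu => hvL ⟨hvK, (Nat.succ_le_succ hvu).trans hui⟩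
  have hv_before_succ : ∀ y, u < y → σopt v < σopt y :=
    fun y huy => (hord hvw).trans_le (hw_first y huy)
  have hpred_before_u : ∀ x, x < v → σopt x < σopt u :=
    fun x hxv => hpred u huK x (Set.mem_biUnion hvK hxv)
  exact htvu.not_ge (le_of_forall_totalCost_le hord hopt huv hv_before_succ hpred_before_u)

/-- With `σ_opt` an optimal ordering of a SCHED instance with pairwise distinct
nonnegative processing times, `K` an antichain whose every element has a successor, and all
predecessors of `K` scheduled before all of `K`, each prefix intersection
`K ∩ σ_opt⁻¹({1, …, i})` is non-succ-exchangeable with respect to `K`. -/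
theorem prefix_non_succ_exchangeable {V : Type*} [Fintype V] [PartialOrder V]
    (n : ℕ) (hn : n = Fintype.card V)
    (t : V → ℝ) (ht : Function.Injective t) (ht0 : ∀ v, 0 ≤ t v)
    (σopt : V ≃ Fin n)
    (hord : ∀ u v : V, u < v → σopt u < σopt v)
    (hopt : ∀ σ : V ≃ Fin n, (∀ u v : V, u < v → σ u < σ v) →
      TotalCost n t σopt ≤ TotalCost n t σ)
    (K : Set V) (hK : IsAntichain (· ≤ ·) K)
    (hsucc : ∀ u ∈ K, (succSet u).Nonempty)
    (hpred : ∀ v ∈ K, ∀ x ∈ predSets K, (σopt x : ℕ) < (σopt v : ℕ))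
    (i : ℕ) (hi1 : 1 ≤ i) (hin : i ≤ n) :
    ¬ SuccExchangeable t K (K ∩ {v : V | (σopt v : ℕ) + 1 ≤ i}) := by
  exact prefix_non_succ_exchangeable_general (fun u v => hord u v)
    (fun σ hσ => hopt σ fun _ _ h => hσ h) hsucc hpred i
end

section
/- Let (V, ≤) be a finite partially ordered set, t : V → ℝ injective, M ⊆ V, and K ⊆ V with succ(K) ⊆ M. Then the number of subsets L ⊆ K that are non-succ-exchangeable with respect to K is at most Σ_{l=0}^{|M|} C(|K|, l). -/
/-- `succ(U) = ⋃_{v ∈ U} succ(v)`. -/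
def succSets {V : Type*} [PartialOrder V] (U : Set V) : Set V := ⋃ v ∈ U, succSet v

/-!
A non-succ-exchangeable `L ⊆ K` is determined by a small set `D`: the `t`-least job of
`(K ∩ pred(w)) \ L`, for each `w` for which this set is nonempty. Every such `w` lies in
`succ(K)`, so `D` is a subset of `K` of size at most `|M|`. A job `u ∈ K` belongs to `L` if and
only if some `w > u` has all the members of `D` below it strictly `t`-later than `u`: if `u ∉ L`,
the least job left out below `w` is no later than `u`, while if `u ∈ L`, a `w` witnessing that `L`
is not exchangeable at `u` will do.
-/

/-- The jobs of `K` that come first, in the order of `t`, among the predecessors in `K` of some `w`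
that are missing from `L`. The jobs `w` with no missing predecessor contribute nothing. -/
def firstMissing {V α : Type*} [PartialOrder V] [Preorder α] (t : V → α) (K L : Set V) : Set V :=
  {v | ∃ w, v ∈ (K ∩ predSet w) \ L ∧ IsMinOn t ((K ∩ predSet w) \ L) v}

/-- The candidate for `L` when `firstMissing t K L = D`: the jobs of `K` that have a successor
`w` such that they precede, in the order of `t`, every predecessor of `w` in `D`. -/
def recoverFromMissing {V α : Type*} [PartialOrder V] [Preorder α] (t : V → α) (K D : Set V) :
    Set V :=
  {u ∈ K | ∃ w ∈ succSet u, ∀ v ∈ D ∩ predSet w, t u < t v}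

theorem ncard_setOf_subset_ncard_le {α : Type*} {K : Set α} (hK : K.Finite) (m : ℕ) :
    {D : Set α | D ⊆ K ∧ D.ncard ≤ m}.ncard =
      ∑ l ∈ Finset.range (m + 1), K.ncard.choose l := by
  lift K to Finset α using hK
  have coe_image : {D : Set α | D ⊆ K ∧ D.ncard ≤ m} =
      (↑) '' (({D ∈ K.powerset | D.card ≤ m} : Finset (Finset α)) : Set (Finset α)) := by
    ext D
    constructor
    · rintro ⟨hDK, hDm⟩
      lift D to Finset α using K.finite_toSet.subset hDK
      exact ⟨D, by simpa using And.intro hDK hDm, rfl⟩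
    · rintro ⟨D, hD, rfl⟩
      simpa using hD
  have card_mapsTo : ∀ D ∈ ({D ∈ K.powerset | D.card ≤ m} : Finset (Finset α)),
      D.card ∈ Finset.range (m + 1) := fun D hD =>
    Finset.mem_range_succ_iff.mpr (Finset.mem_filter.mp hD).2
  rw [coe_image, Set.ncard_image_of_injective _ Finset.coe_injective, Set.ncard_coe_finset,
    Set.ncard_coe_finset, Finset.card_eq_sum_card_fiberwise card_mapsTo]
  refine Finset.sum_congr rfl fun l hl => ?_
  rw [← Finset.card_powersetCard, Finset.powersetCard_eq_filter, Finset.filter_filter]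
  congr! 2 with D
  have hlm : l ≤ m := Finset.mem_range_succ_iff.mp hl
  omega

section FirstMissing

variable {V α : Type*} [PartialOrder V] {K L M : Set V}

theorem firstMissing_subset_sdiff [Preorder α] (t : V → α) : firstMissing t K L ⊆ K \ L := by
  rintro v ⟨w, ⟨⟨hvK, -⟩, hvL⟩, -⟩
  exact ⟨hvK, hvL⟩

theorem ncard_firstMissing_le [PartialOrder α] {t : V → α} (ht : Set.InjOn t K)
    (hM : M.Finite) (hKM : succSets K ⊆ M) : (firstMissing t K L).ncard ≤ M.ncard := by
  choose! w hw using fun v (hv : v ∈ firstMissing t K L) => hv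
  refine Set.ncard_le_ncard_of_injOn w (fun v hv => ?_) (fun v hv v' hv' hvv' => ?_) hM
  · exact hKM (Set.mem_biUnion (hw v hv).1.1.1 (hw v hv).1.1.2)
  · obtain ⟨hvmem, hvmin⟩ := hw v hv
    obtain ⟨hvmem', hvmin'⟩ := hw v' hv'
    rw [← hvv'] at hvmem' hvmin'
    exact ht hvmem.1.1 hvmem'.1.1 ((hvmin hvmem').antisymm (hvmin' hvmem))

theorem recoverFromMissing_firstMissing_subset [LinearOrder α] (t : V → α) (hK : K.Finite) :
    recoverFromMissing t K (firstMissing t K L) ⊆ L := by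
  rintro u ⟨huK, w, huw, hu_lt⟩
  by_contra huL
  have hu : u ∈ (K ∩ predSet w) \ L := ⟨⟨huK, huw⟩, huL⟩
  obtain ⟨v, hv, hv_min⟩ :=
    Set.exists_min_image ((K ∩ predSet w) \ L) t (hK.subset fun _ hx => hx.1.1) ⟨u, hu⟩
  exact (hv_min u hu).not_gt (hu_lt v ⟨⟨w, hv, hv_min⟩, hv.1.2⟩)

theorem subset_recoverFromMissing_firstMissing {t : V → ℝ} (ht : Set.InjOn t K) (hLK : L ⊆ K)
    (hL : ¬ SuccExchangeable t K L) : L ⊆ recoverFromMissing t K (firstMissing t K L) := by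
  intro u huL
  obtain ⟨w, huw, hu_le⟩ : ∃ w ∈ succSet u, ∀ v ∈ (K ∩ predSet w) \ L, t u ≤ t v := by
    by_contra! h
    exact hL ⟨u, huL, h⟩
  refine ⟨hLK huL, w, huw, fun v ⟨hv, hvw⟩ => ?_⟩
  obtain ⟨hvK, hvL⟩ := firstMissing_subset_sdiff t hv
  have htuv : t u ≠ t v := fun h => hvL (ht (hLK huL) hvK h ▸ huL)
  exact (hu_le v ⟨⟨hvK, hvw⟩, hvL⟩).lt_of_ne htuv

theorem injOn_firstMissing {t : V → ℝ} (ht : Set.InjOn t K) (hK : K.Finite) :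
    Set.InjOn (firstMissing t K) {L | L ⊆ K ∧ ¬ SuccExchangeable t K L} := by
  have left_inv : Set.LeftInvOn (recoverFromMissing t K) (firstMissing t K)
      {L | L ⊆ K ∧ ¬ SuccExchangeable t K L} := fun _ ⟨hLK, hL⟩ =>
    (recoverFromMissing_firstMissing_subset t hK).antisymm
      (subset_recoverFromMissing_firstMissing ht hLK hL)
  exact left_inv.injOn

end FirstMissing

theorem count_non_succ_exchangeable_general {V : Type*} [PartialOrder V] (t : V → ℝ)
    (M K : Set V) (hM : M.Finite) (hK : K.Finite) (ht : Set.InjOn t K) (hKM : succSets K ⊆ M) :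
    {L : Set V | L ⊆ K ∧ ¬ SuccExchangeable t K L}.ncard ≤
      ∑ l ∈ Finset.range (M.ncard + 1), (K.ncard).choose l := by
  rw [← ncard_setOf_subset_ncard_le hK]
  refine Set.ncard_le_ncard_of_injOn (firstMissing t K) (fun L _ => ⟨?_, ?_⟩)
    (injOn_firstMissing ht hK) (hK.finite_subsets.subset fun _ hD => hD.1)
  · exact (firstMissing_subset_sdiff t).trans Set.sdiff_subset
  · exact ncard_firstMissing_le ht hM hKM

/-- For `K ⊆ V` with `succ(K) ⊆ M` and injective processing times, the number
of subsets `L ⊆ K` that are non-succ-exchangeable with respect to `K` is at most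
`Σ_{l=0}^{|M|} C(|K|, l)`. -/
theorem count_non_succ_exchangeable {V : Type*} [Fintype V] [PartialOrder V]
    (t : V → ℝ) (ht : Function.Injective t)
    (M K : Set V) (hKM : succSets K ⊆ M) :
    {L : Set V | L ⊆ K ∧ ¬ SuccExchangeable t K L}.ncard ≤
      ∑ l ∈ Finset.range (M.ncard + 1), (K.ncard).choose l := by
  exact count_non_succ_exchangeable_general t M K M.toFinite K.toFinite ht.injOn hKM
end

section
/- Let (V, ≤) be a finite partially ordered set, t : V → ℝ injective, M ⊆ V, and K ⊆ V with pred(K) ⊆ M. Then the number of subsets L ⊆ K that are non-pred-exchangeable with respect to K is at most Σ_{l=0}^{|M|} C(|K|, l). -/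
/-- `L ⊆ K` is pred-exchangeable with respect to `K` if there exists `v ∈ K \ L` such that
for every `w ∈ pred(v)` there is `u_w ∈ L ∩ succ(w)` with `t(u_w) > t(v)`. -/
def PredExchangeable {V : Type*} [PartialOrder V] (t : V → ℝ) (K L : Set V) : Prop :=
  ∃ v ∈ K \ L, ∀ w ∈ predSet v, ∃ uw ∈ L ∩ succSet w, t uw > t v

/-!
For each `w ∈ M` mark the longest successor of `w` in `L`, which is unique by injectivity. This
marks a set `T` of at most `|M|` elements of `L`. An unmarked `v ∈ L` is beaten, for each `w < v`,
by the marked successor of `w`, while non-exchangeability puts into `L` every `v ∈ K` that is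
beaten in this way. Hence `T` determines `L`, and there are at most as many sets `L` as there are
subsets of `K` of size at most `|M|`.
-/

theorem ncard_powerset_ncard_le {α : Type*} {K : Set α} (hK : K.Finite) (m : ℕ) :
    {A ⊆ K | A.ncard ≤ m}.ncard = ∑ l ∈ Finset.range (m + 1), K.ncard.choose l := by
  have slices : {A ⊆ K | A.ncard ≤ m} =
      ⋃ l ∈ (Finset.range (m + 1) : Set ℕ), {A ⊆ K | A.ncard = l} := by
    ext A
    simp [and_comm]
  have slice_finite (l : ℕ) : {A ⊆ K | A.ncard = l}.Finite :=
    hK.finite_subsets.subset fun _ hA ↦ hA.1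
  have slices_disjoint :
      (Finset.range (m + 1) : Set ℕ).PairwiseDisjoint fun l ↦ {A ⊆ K | A.ncard = l} :=
    fun _ _ _ _ hne ↦ Set.disjoint_left.2 fun _ hA hA' ↦ hne (hA.2.symm.trans hA'.2)
  rw [slices, (Finset.finite_toSet _).ncard_biUnion (fun l _ ↦ slice_finite l) slices_disjoint,
    finsum_mem_coe_finset]
  exact Finset.sum_congr rfl fun l _ ↦ Set.ncard_powerset_ncard hK l

theorem predSets_mono {V : Type*} [PartialOrder V] {L K : Set V} (hLK : L ⊆ K) :
    predSets L ⊆ predSets K :=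
  Set.biUnion_subset_biUnion_left hLK

section LongestSuccs

variable {V α : Type*} [PartialOrder V] [LinearOrder α] {t : V → α} {M K L : Set V}

/-- The elements of `L` that are longest, with respect to the processing times `t`, among the
successors in `L` of some `w ∈ M`. -/
def longestSuccs (t : V → α) (M L : Set V) : Set V :=
  ⋃ w ∈ M, {a | MaximalFor (· ∈ L ∩ succSet w) t a}

/-- The elements `v` such that every predecessor of `v` has a successor in `L` that is longer
than `v`. Exchangeability of `L` with respect to `K` means that some such `v` lies in `K \ L`. -/
def dominatedBy (t : V → α) (L : Set V) : Set V :=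
  {v | ∀ w ∈ predSet v, ∃ u ∈ L ∩ succSet w, t v < t u}

theorem longestSuccs_subset : longestSuccs t M L ⊆ L :=
  Set.iUnion₂_subset fun _ _ _ ha ↦ ha.prop.1

theorem dominatedBy_mono {L' : Set V} (hLL' : L ⊆ L') : dominatedBy t L ⊆ dominatedBy t L' :=
  fun _ hv w hw ↦ (hv w hw).imp fun _ hu ↦ ⟨⟨hLL' hu.1.1, hu.1.2⟩, hu.2⟩

theorem exists_mem_longestSuccs_ge (hL : L.Finite) {v w : V} (hw : w ∈ M) (hv : v ∈ L)
    (hwv : w < v) : ∃ a ∈ longestSuccs t M L, w < a ∧ t v ≤ t a := by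
  obtain ⟨a, ha⟩ := (hL.inter_of_left (succSet w)).exists_maximalFor t _ ⟨v, hv, hwv⟩
  exact ⟨a, Set.mem_biUnion hw ha, ha.prop.2, (le_total _ _).elim id (ha.2 ⟨hv, hwv⟩)⟩

theorem subsingleton_setOf_maximalFor {ι : Type*} {f : ι → α} {s : Set ι} (hf : s.InjOn f) :
    {i | MaximalFor (· ∈ s) f i}.Subsingleton := fun _ hi _ hj ↦
  hf hi.prop hj.prop <|
    (le_total _ _).elim (fun h ↦ h.antisymm (hi.2 hj.prop h)) fun h ↦ (hj.2 hi.prop h).antisymm h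

theorem ncard_longestSuccs_le (hM : M.Finite) (ht : L.InjOn t) :
    (longestSuccs t M L).ncard ≤ M.ncard := by
  have ncard_le_one (w : V) : {a | MaximalFor (· ∈ L ∩ succSet w) t a}.ncard ≤ 1 := by
    have hsub := subsingleton_setOf_maximalFor (ht.mono (L.inter_subset_left (t := succSet w)))
    exact (Set.ncard_le_one hsub.finite).2 hsub
  lift M to Finset V using hM
  calc (longestSuccs t M L).ncard
      ≤ ∑ w ∈ M, {a | MaximalFor (· ∈ L ∩ succSet w) t a}.ncard := M.set_ncard_biUnion_le _
    _ ≤ ∑ w ∈ M, 1 := Finset.sum_le_sum fun w _ ↦ ncard_le_one w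
    _ = (M : Set V).ncard := by rw [← Finset.card_eq_sum_ones, Set.ncard_coe_finset]

theorem subset_longestSuccs_union_dominatedBy (hL : L.Finite) (ht : L.InjOn t)
    (hLM : predSets L ⊆ M) :
    L ⊆ longestSuccs t M L ∪ dominatedBy t (longestSuccs t M L) := by
  intro v hv
  refine or_iff_not_imp_left.2 fun hvT w hwv ↦ ?_
  obtain ⟨a, ha, hwa, hva⟩ :=
    exists_mem_longestSuccs_ge (t := t) hL (hLM (Set.mem_biUnion hv hwv)) hv hwv
  have hne : t v ≠ t a := fun h ↦ hvT (ht hv (longestSuccs_subset ha) h ▸ ha)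
  exact ⟨a, ⟨ha, hwa⟩, hva.lt_of_ne hne⟩

end LongestSuccs

section NonPredExchangeable

variable {V : Type*} [PartialOrder V] {t : V → ℝ} {M K L : Set V}

theorem not_predExchangeable_iff : ¬ PredExchangeable t K L ↔ K ∩ dominatedBy t L ⊆ L :=
  ⟨fun hL v ⟨hvK, hvD⟩ ↦ by_contra fun hvL ↦ hL ⟨v, ⟨hvK, hvL⟩, hvD⟩,
    fun h ⟨_, ⟨hvK, hvL⟩, hvD⟩ ↦ hvL (h ⟨hvK, hvD⟩)⟩

theorem longestSuccs_union_eq_of_not_predExchangeable (hK : K.Finite) (ht : K.InjOn t)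
    (hKM : predSets K ⊆ M) (hLK : L ⊆ K) (hL : ¬ PredExchangeable t K L) :
    longestSuccs t M L ∪ K ∩ dominatedBy t (longestSuccs t M L) = L := by
  refine (Set.union_subset longestSuccs_subset ?_).antisymm fun v hv ↦ ?_
  · exact (Set.inter_subset_inter_right K (dominatedBy_mono longestSuccs_subset)).trans
      (not_predExchangeable_iff.1 hL)
  · exact (subset_longestSuccs_union_dominatedBy (hK.subset hLK) (ht.mono hLK)
      ((predSets_mono hLK).trans hKM) hv).imp_right fun hvD ↦ ⟨hLK hv, hvD⟩

theorem injOn_longestSuccs (hK : K.Finite) (ht : K.InjOn t) (hKM : predSets K ⊆ M) :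
    {L | L ⊆ K ∧ ¬ PredExchangeable t K L}.InjOn (longestSuccs t M) := by
  rintro L ⟨hLK, hL⟩ L' ⟨hLK', hL'⟩ hLL'
  rw [← longestSuccs_union_eq_of_not_predExchangeable hK ht hKM hLK hL, hLL',
    longestSuccs_union_eq_of_not_predExchangeable hK ht hKM hLK' hL']

theorem count_non_pred_exchangeable_general (hK : K.Finite) (hM : M.Finite) (ht : K.InjOn t)
    (hKM : predSets K ⊆ M) :
    {L : Set V | L ⊆ K ∧ ¬ PredExchangeable t K L}.ncard ≤
      ∑ l ∈ Finset.range (M.ncard + 1), (K.ncard).choose l := by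
  rw [← ncard_powerset_ncard_le hK]
  refine Set.ncard_le_ncard_of_injOn (longestSuccs t M) ?_ (injOn_longestSuccs hK ht hKM)
    (hK.finite_subsets.subset fun _ hA ↦ hA.1)
  rintro L ⟨hLK, -⟩
  exact ⟨longestSuccs_subset.trans hLK, ncard_longestSuccs_le hM (ht.mono hLK)⟩

end NonPredExchangeable

/-- For `K ⊆ V` with `pred(K) ⊆ M` and injective processing times, the number
of subsets `L ⊆ K` that are non-pred-exchangeable with respect to `K` is at most
`Σ_{l=0}^{|M|} C(|K|, l)`. -/
theorem count_non_pred_exchangeable {V : Type*} [Fintype V] [PartialOrder V]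
    (t : V → ℝ) (ht : Function.Injective t)
    (M K : Set V) (hKM : predSets K ⊆ M) :
    {L : Set V | L ⊆ K ∧ ¬ PredExchangeable t K L}.ncard ≤
      ∑ l ∈ Finset.range (M.ncard + 1), (K.ncard).choose l :=
  count_non_pred_exchangeable_general K.toFinite M.toFinite ht.injOn hKM
end

section
/- Let (V, ≤) be a finite partially ordered set, t : V → ℝ injective, M ⊆ V, and K ⊆ V with succ(K) ⊆ M. With f and g the succ-encoding and succ-decoding maps defined below, for every subset Y ⊆ K we have g(f(Y)) ⊆ Y. -/
/-- The succ-encoding map: `f(Y)` is the set of "least expensive predecessors outside `Y`",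
i.e. all `v` that, for some `w ∈ M`, are the element of `(K \ Y) ∩ pred(w)` with smallest
processing time (the value `nil`, taken when this set is empty, contributes no element). -/
def succEncode {V : Type*} [PartialOrder V] (t : V → ℝ) (M K Y : Set V) : Set V :=
  {v | ∃ w ∈ M, v ∈ (K \ Y) ∩ predSet w ∧ ∀ z ∈ (K \ Y) ∩ predSet w, t v ≤ t z}

/-- The succ-decoding map: `g(Z)` is the set of `v ∈ K` for which there is `w ∈ succ(v)`
such that every `z ∈ Z ∩ pred(w)` satisfies `t(z) > t(v)`. -/
def succDecode {V : Type*} [PartialOrder V] (t : V → ℝ) (K Z : Set V) : Set V :=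
  {v | v ∈ K ∧ ∃ w ∈ succSet v, ∀ z ∈ Z ∩ predSet w, t v < t z}

theorem exists_mem_succEncode_le {V : Type*} [PartialOrder V] {t : V → ℝ} {M K Y : Set V}
    {v w : V} (hwf : (t '' ((K \ Y) ∩ predSet w)).IsWF) (hw : w ∈ M)
    (hv : v ∈ (K \ Y) ∩ predSet w) :
    ∃ z ∈ succEncode t M K Y ∩ predSet w, t z ≤ t v := by
  have hne : (t '' ((K \ Y) ∩ predSet w)).Nonempty := ⟨t v, Set.mem_image_of_mem t hv⟩
  obtain ⟨z, hz, htz⟩ := hwf.min_mem hne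
  have hle : ∀ x ∈ (K \ Y) ∩ predSet w, t z ≤ t x := fun x hx ↦
    htz.trans_le (hwf.min_le hne (Set.mem_image_of_mem t hx))
  exact ⟨z, ⟨⟨w, hw, hz, hle⟩, hz.2⟩, hle v hv⟩

theorem succDecode_succEncode_subset_general {V : Type*} [PartialOrder V] {t : V → ℝ}
    {M K : Set V} (hwf : ∀ w, (t '' (K ∩ predSet w)).IsWF) (hKM : succSets K ⊆ M) (Y : Set V) :
    succDecode t K (succEncode t M K Y) ⊆ Y := by
  rintro v ⟨hvK, w, hvw, hlt⟩
  by_contra hvY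
  have hwM : w ∈ M := hKM (Set.mem_biUnion hvK hvw)
  have hwfY : (t '' ((K \ Y) ∩ predSet w)).IsWF :=
    (hwf w).mono (Set.image_mono (Set.inter_subset_inter_left _ Set.sdiff_subset))
  obtain ⟨z, hz, hzv⟩ := exists_mem_succEncode_le hwfY hwM ⟨⟨hvK, hvY⟩, hvw⟩
  exact (hlt z hz).not_ge hzv

/-- For `K ⊆ V` with `succ(K) ⊆ M` and injective processing times,
every `Y ⊆ K` satisfies `g(f(Y)) ⊆ Y`. -/
theorem succDecode_succEncode_subset {V : Type*} [Fintype V] [PartialOrder V]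
    (t : V → ℝ) (ht : Function.Injective t)
    (M K : Set V) (hKM : succSets K ⊆ M)
    (Y : Set V) (hY : Y ⊆ K) :
    succDecode t K (succEncode t M K Y) ⊆ Y :=
  succDecode_succEncode_subset_general (fun _ ↦ (Set.toFinite _).isWF) hKM Y
end

section
/- Let (V, ≤) be a finite partially ordered set, t : V → ℝ injective, M ⊆ V, and K ⊆ V with pred(K) ⊆ M. With f and g the pred-encoding and pred-decoding maps defined below, for every subset Y ⊆ K we have Y ⊆ g(f(Y)). -/
/-- The pred-encoding map: `f(Y)` is the set of "most expensive successors in `Y`",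
i.e. all `v` that, for some `w ∈ M`, are the element of `Y ∩ succ(w)` with largest
processing time (the value `nil`, taken when this set is empty, contributes no element). -/
def predEncode {V : Type*} [PartialOrder V] (t : V → ℝ) (M Y : Set V) : Set V :=
  {v | ∃ w ∈ M, v ∈ Y ∩ succSet w ∧ ∀ z ∈ Y ∩ succSet w, t z ≤ t v}

/-- The pred-decoding map: `g(Z)` is the set of `v ∈ K` such that for every `w ∈ pred(v)`
there exists `z ∈ Z ∩ succ(w)` with `t(z) ≥ t(v)`. -/
def predDecode {V : Type*} [PartialOrder V] (t : V → ℝ) (K Z : Set V) : Set V :=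
  {v | v ∈ K ∧ ∀ w ∈ predSet v, ∃ z ∈ Z ∩ succSet w, t v ≤ t z}

section

variable {V : Type*} [PartialOrder V]

theorem mem_predSets_iff_nonempty_inter_succSet {U : Set V} {w : V} :
    w ∈ predSets U ↔ (U ∩ succSet w).Nonempty :=
  Set.mem_iUnion₂.trans (exists_congr fun _ => exists_prop)

theorem predSets_mono_s10 : Monotone (predSets : Set V → Set V) :=
  fun _ _ hUW => Set.biUnion_subset_biUnion_left hUW

theorem subset_predDecode_predEncode_general {t : V → ℝ} {M K Y : Set V}
    (hYM : predSets Y ⊆ M) (hYK : Y ⊆ K)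
    (hmax : ∀ w ∈ predSets Y, ∃ z ∈ Y ∩ succSet w, ∀ y ∈ Y ∩ succSet w, t y ≤ t z) :
    Y ⊆ predDecode t K (predEncode t M Y) := by
  intro v hvY
  refine ⟨hYK hvY, fun w hwv => ?_⟩
  have hvw : v ∈ Y ∩ succSet w := ⟨hvY, hwv⟩
  have hwY : w ∈ predSets Y := mem_predSets_iff_nonempty_inter_succSet.2 ⟨v, hvw⟩
  -- `z` is `f_Y(w)`
  obtain ⟨z, hzw, hz_max⟩ := hmax w hwY
  have hz_code : z ∈ predEncode t M Y := ⟨w, hYM hwY, hzw, hz_max⟩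
  exact ⟨z, ⟨hz_code, hzw.2⟩, hz_max v hvw⟩

end

/-- For `K ⊆ V` with `pred(K) ⊆ M` and injective processing times,
every `Y ⊆ K` satisfies `Y ⊆ g(f(Y))`. -/
theorem subset_predDecode_predEncode {V : Type*} [Fintype V] [PartialOrder V]
    (t : V → ℝ) (ht : Function.Injective t)
    (M K : Set V) (hKM : predSets K ⊆ M)
    (Y : Set V) (hY : Y ⊆ K) :
    Y ⊆ predDecode t K (predEncode t M Y) :=
  subset_predDecode_predEncode_general ((predSets_mono_s10 hY).trans hKM) hY fun _ hw =>
    Set.exists_max_image _ t (Set.toFinite _) (mem_predSets_iff_nonempty_inter_succSet.1 hw)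
end

section
/- Let (V, ≤) be a finite partially ordered set, t : V → ℝ injective, M ⊆ V, and K ⊆ V with pred(K) ⊆ M. With f and g the pred-encoding and pred-decoding maps defined below, if a subset Y ⊆ K does not satisfy g(f(Y)) ⊆ Y, then Y is pred-exchangeable with respect to K. Consequently, every non-pred-exchangeable subset Y ⊆ K satisfies g(f(Y)) = Y. -/
/-!
Decoding never loses an element: `Y ⊆ K` always lies in `g(Y)`, and an element of `g(Y) \ Y` is
exactly a witness that `Y` is pred-exchangeable, injectivity of `t` making the inequality strict.
Encoding keeps, for each `w ∈ M`, the largest element of `Y ∩ succ(w)`, which is all that decoding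
consults; hence `g(f(Y)) = g(Y)`.
-/

section

variable {V : Type*} [PartialOrder V] {t : V → ℝ} {M K Y : Set V}

theorem predEncode_subset : predEncode t M Y ⊆ Y :=
  fun _ ⟨_, _, hv, _⟩ => hv.1

theorem predDecode_mono {Z : Set V} (hZY : Z ⊆ Y) : predDecode t K Z ⊆ predDecode t K Y :=
  fun _ ⟨hvK, hv⟩ => ⟨hvK, fun w hw =>
    let ⟨z, hz, hvz⟩ := hv w hw
    ⟨z, ⟨hZY hz.1, hz.2⟩, hvz⟩⟩

theorem subset_predDecode (hYK : Y ⊆ K) : Y ⊆ predDecode t K Y :=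
  fun v hv => ⟨hYK hv, fun _ hw => ⟨v, ⟨hv, hw⟩, le_rfl⟩⟩

theorem predExchangeable_iff_not_predDecode_subset (ht : Set.InjOn t K) (hYK : Y ⊆ K) :
    PredExchangeable t K Y ↔ ¬ predDecode t K Y ⊆ Y := by
  rw [Set.not_subset]
  constructor
  · rintro ⟨v, ⟨hvK, hvY⟩, hv⟩
    refine ⟨v, ⟨hvK, fun w hw => ?_⟩, hvY⟩
    obtain ⟨u, hu, hvu⟩ := hv w hw
    exact ⟨u, hu, hvu.le⟩
  · rintro ⟨v, ⟨hvK, hv⟩, hvY⟩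
    refine ⟨v, ⟨hvK, hvY⟩, fun w hw => ?_⟩
    obtain ⟨u, hu, hvu⟩ := hv w hw
    have hne : t v ≠ t u := (ht.ne_iff hvK (hYK hu.1)).2 (ne_of_mem_of_not_mem hu.1 hvY).symm
    exact ⟨u, hu, hvu.lt_of_ne hne⟩

theorem not_predExchangeable_iff_predDecode_eq (ht : Set.InjOn t K) (hYK : Y ⊆ K) :
    ¬ PredExchangeable t K Y ↔ predDecode t K Y = Y := by
  rw [predExchangeable_iff_not_predDecode_subset ht hYK, not_not]
  exact ⟨fun h => h.antisymm (subset_predDecode hYK), Eq.subset⟩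

theorem exists_mem_predEncode_le (hY : (t '' Y).WellFoundedOn (· > ·)) {v w : V} (hw : w ∈ M)
    (hv : v ∈ Y ∩ succSet w) : ∃ z ∈ predEncode t M Y ∩ succSet w, t v ≤ t z := by
  have hwf : (t '' (Y ∩ succSet w)).WellFoundedOn (· > ·) :=
    hY.subset (Set.image_mono Set.inter_subset_left)
  obtain ⟨_, hmax⟩ := hwf.exists_maximal ⟨t v, v, hv, rfl⟩
  obtain ⟨z, hz, rfl⟩ := hmax.prop
  have hle : ∀ y ∈ Y ∩ succSet w, t y ≤ t z := fun y hy =>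
    (maximal_iff_isGreatest.1 hmax).2 ⟨y, hy, rfl⟩
  exact ⟨z, ⟨⟨w, hw, hz, hle⟩, hz.2⟩, hle v hv⟩

theorem predDecode_predEncode (hKM : predSets K ⊆ M) (hY : (t '' Y).WellFoundedOn (· > ·)) :
    predDecode t K (predEncode t M Y) = predDecode t K Y := by
  refine (predDecode_mono predEncode_subset).antisymm fun v ⟨hvK, hv⟩ => ⟨hvK, fun w hw => ?_⟩
  have hwM : w ∈ M := hKM (Set.mem_biUnion hvK hw)
  obtain ⟨u, hu, hvu⟩ := hv w hw
  obtain ⟨z, hz, huz⟩ := exists_mem_predEncode_le hY hwM hu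
  exact ⟨z, hz, hvu.trans huz⟩

theorem predEncode_decode_fixed_point_general (ht : Set.InjOn t K) (hKM : predSets K ⊆ M)
    (hYK : Y ⊆ K) (hY : (t '' Y).WellFoundedOn (· > ·)) :
    ¬ PredExchangeable t K Y ↔ predDecode t K (predEncode t M Y) = Y := by
  rw [predDecode_predEncode hKM hY, not_predExchangeable_iff_predDecode_eq ht hYK]

end

/-- For `K ⊆ V` with `pred(K) ⊆ M` and injective processing times:
if `Y ⊆ K` does not satisfy `g(f(Y)) ⊆ Y`, then `Y` is pred-exchangeable with respect
to `K`; consequently every non-pred-exchangeable `Y ⊆ K` satisfies `g(f(Y)) = Y`. -/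
theorem predEncode_decode_fixed_point {V : Type*} [Fintype V] [PartialOrder V]
    (t : V → ℝ) (ht : Function.Injective t)
    (M K : Set V) (hKM : predSets K ⊆ M)
    (Y : Set V) (hY : Y ⊆ K) :
    (¬ predDecode t K (predEncode t M Y) ⊆ Y → PredExchangeable t K Y)
    ∧ (¬ PredExchangeable t K Y → predDecode t K (predEncode t M Y) = Y) := by
  have h := predEncode_decode_fixed_point_general ht.injOn hKM hY (Set.toFinite _).wellFoundedOn
  exact ⟨fun hsub => by_contra fun hex => hsub (h.1 hex).subset, h.1⟩
end

section
/- Let (V, ≤) be a finite partially ordered set, t : V → ℝ injective, M ⊆ V, and K ⊆ V with succ(K) ⊆ M. The map Y ↦ f(Y), where f is the succ-encoding map defined below, is injective on the family of subsets of K that are non-succ-exchangeable with respect to K. -/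
/-!
The encoding `f(Y)` lies outside `Y`. So if `f(Y) = f(Z)`, then `f(Z)` misses `Y`. Were there some
`u ∈ Y \ Z`, then for every `w ∈ succ(u)` a cheapest element of `(K \ Z) ∩ pred(w)` would lie in
`f(Z)`, hence outside `Y`; it would be strictly cheaper than `u`, because `f(Z)` contains every
cheapest element and `u ∉ f(Z)`. Thus `u` would witness that `Y` is succ-exchangeable.
-/

section SuccEncode

variable {V : Type*} [PartialOrder V] {t : V → ℝ} {M K Y Z : Set V} {u w : V}

theorem succSets_mono : Monotone (succSets : Set V → Set V) :=
  fun _ _ h => Set.biUnion_subset_biUnion_left h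

theorem succEncode_subset_sdiff : succEncode t M K Y ⊆ K \ Y :=
  fun _ ⟨_, _, hv, _⟩ => hv.1

theorem disjoint_succEncode : Disjoint Y (succEncode t M K Y) :=
  disjoint_sdiff_self_right.mono_right succEncode_subset_sdiff

theorem exists_mem_succEncode_lt (hw : w ∈ M) (hwf : (t '' ((K \ Y) ∩ predSet w)).IsWF)
    (hu : u ∈ (K \ Y) ∩ predSet w) (hu_enc : u ∉ succEncode t M K Y) :
    ∃ v ∈ succEncode t M K Y ∩ predSet w, t v < t u := by
  obtain ⟨v, hv, hv_min⟩ := hwf.min_mem (Set.Nonempty.image t ⟨u, hu⟩)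
  have hv_le : ∀ z ∈ (K \ Y) ∩ predSet w, t v ≤ t z := fun z hz =>
    hv_min.trans_le (hwf.min_le _ (Set.mem_image_of_mem t hz))
  refine ⟨v, ⟨⟨w, hw, hv, hv_le⟩, hv.2⟩, lt_of_not_ge fun huv => hu_enc ?_⟩
  exact ⟨w, hw, hu, fun z hz => huv.trans (hv_le z hz)⟩

theorem subset_of_disjoint_succEncode (hYM : succSets Y ⊆ M)
    (hwf : ∀ w ∈ M, (t '' (K ∩ predSet w)).IsWF) (hYK : Y ⊆ K)
    (hY : ¬ SuccExchangeable t K Y) (hYZ : Disjoint Y (succEncode t M K Z)) : Y ⊆ Z := by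
  intro u hu
  by_contra huZ
  refine hY ⟨u, hu, fun w huw => ?_⟩
  have hwM : w ∈ M := hYM (Set.mem_biUnion hu huw)
  have hwf' : (t '' ((K \ Z) ∩ predSet w)).IsWF :=
    (hwf w hwM).mono (Set.image_mono (Set.inter_subset_inter_left _ Set.sdiff_subset))
  obtain ⟨v, ⟨hv_enc, hvw⟩, hvu⟩ :=
    exists_mem_succEncode_lt hwM hwf' ⟨⟨hYK hu, huZ⟩, huw⟩ (hYZ.notMem_of_mem_left hu)
  exact ⟨v, ⟨⟨(succEncode_subset_sdiff hv_enc).1, hvw⟩, hYZ.notMem_of_mem_right hv_enc⟩, hvu⟩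

theorem succEncode_injOn_non_exchangeable_general (hKM : succSets K ⊆ M)
    (hwf : ∀ w ∈ M, (t '' (K ∩ predSet w)).IsWF) :
    Set.InjOn (succEncode t M K) {Y : Set V | Y ⊆ K ∧ ¬ SuccExchangeable t K Y} := by
  have subset_of_eq {Y Z : Set V} (hYK : Y ⊆ K) (hY : ¬ SuccExchangeable t K Y)
      (h : succEncode t M K Y = succEncode t M K Z) : Y ⊆ Z :=
    subset_of_disjoint_succEncode ((succSets_mono hYK).trans hKM) hwf hYK hY
      (h ▸ disjoint_succEncode)
  rintro Y ⟨hYK, hY⟩ Z ⟨hZK, hZ⟩ h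
  exact (subset_of_eq hYK hY h).antisymm (subset_of_eq hZK hZ h.symm)

end SuccEncode

/-- For `K ⊆ V` with `succ(K) ⊆ M` and injective processing times, the
succ-encoding map `Y ↦ f(Y)` is injective on the family of subsets of `K` that are
non-succ-exchangeable with respect to `K`. -/
theorem succEncode_injOn_non_exchangeable {V : Type*} [Fintype V] [PartialOrder V]
    (t : V → ℝ) (ht : Function.Injective t)
    (M K : Set V) (hKM : succSets K ⊆ M) :
    Set.InjOn (succEncode t M K) {Y : Set V | Y ⊆ K ∧ ¬ SuccExchangeable t K Y} :=
  succEncode_injOn_non_exchangeable_general hKM fun _ _ => (Set.toFinite _).isWF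
end

section
/- Let n be an even positive integer. Then the function x ↦ 2^x · C(n − x, n/2) is nonincreasing for integers x with 0 ≤ x ≤ n/2; equivalently, for every integer x with 0 ≤ x < n/2, 2^(x+1) · C(n − x − 1, n/2) ≤ 2^x · C(n − x, n/2). -/
/-!
By Pascal's rule `C(N + 1, k) = C(N, k - 1) + C(N, k)`, the inequality `2 * C(N, k) ≤ C(N + 1, k)`
amounts to `C(N, k) ≤ C(N, k - 1)`, which holds in the second half of row `N` of Pascal's triangle,
`N < 2k`. For `k = n / 2` with `n` even this covers every `N = n - x - 1`.
-/

theorem choose_succ_le_choose {n k : ℕ} (h : n ≤ 2 * k + 1) : n.choose (k + 1) ≤ n.choose k := by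
  refine Nat.le_of_mul_le_mul_right ?_ k.succ_pos
  calc
    n.choose (k + 1) * (k + 1) = n.choose k * (n - k) := Nat.choose_succ_right_eq n k
    _ ≤ n.choose k * (k + 1) := by gcongr; omega

theorem two_mul_choose_le_choose_succ {n k : ℕ} (h : n < 2 * k) :
    2 * n.choose k ≤ (n + 1).choose k := by
  obtain ⟨j, rfl⟩ : ∃ j, k = j + 1 := Nat.exists_eq_succ_of_ne_zero (by omega)
  calc
    2 * n.choose (j + 1) = n.choose (j + 1) + n.choose (j + 1) := two_mul _
    _ ≤ n.choose j + n.choose (j + 1) := by gcongr; exact choose_succ_le_choose (by omega)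
    _ = (n + 1).choose (j + 1) := (Nat.choose_succ_succ n j).symm

theorem two_pow_mul_choose_antitone_general {n k x : ℕ} (hnk : n ≤ 2 * k) (hx : x < n) :
    2 ^ (x + 1) * (n - x - 1).choose k ≤ 2 ^ x * (n - x).choose k := by
  calc
    2 ^ (x + 1) * (n - x - 1).choose k = 2 ^ x * (2 * (n - x - 1).choose k) := by ring
    _ ≤ 2 ^ x * (n - x - 1 + 1).choose k := by
      gcongr
      exact two_mul_choose_le_choose_succ (by omega)
    _ = 2 ^ x * (n - x).choose k := by rw [Nat.sub_add_cancel (Nat.sub_pos_of_lt hx)]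

/-- For an even positive integer `n`, the function
`x ↦ 2^x · C(n − x, n/2)` is nonincreasing for integers `0 ≤ x ≤ n/2`; equivalently,
for every integer `0 ≤ x < n/2` we have
`2^(x+1) · C(n − x − 1, n/2) ≤ 2^x · C(n − x, n/2)`. -/
theorem two_pow_mul_choose_antitone (n : ℕ) (hn : 0 < n) (heven : Even n)
    (x : ℕ) (hx : x < n / 2) :
    2 ^ (x + 1) * Nat.choose (n - x - 1) (n / 2) ≤
      2 ^ x * Nat.choose (n - x) (n / 2) :=
  two_pow_mul_choose_antitone_general (Nat.two_mul_div_two_of_even heven).ge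
    (hx.trans_le (Nat.div_le_self n 2))
end

section
/- Let V be a finite set with |V| = n, n even, and let W ⊆ V with |W| ≤ n/2. Then the number of subsets X ⊆ V satisfying |W \ X| ≤ max(0, n/2 − |X|) is at most 2^(n − |W|) + Σ_{j=0}^{n/2 − |W|} C(n, j) + (n+1)² · 2^(|W|) · C(n − |W|, n/2). -/
/-!
Write `n = |V|` and `m = n / 2`. Since `|W \ X| + |X| = |W ∪ X|`, the condition on `X` says that
`W ⊆ X` or `|W ∪ X| ≤ m`. There are `2 ^ (n - |W|)` sets of the first kind. A set of the second
kind consists of an arbitrary part inside `W` and a part outside `W` with some `j ≤ m - |W|`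
elements, and `C(n - |W|, j) ≤ C(n - |W|, m)` because `j` is at most both `m` and `n - |W| - m`.
-/

section AcceptedSets

open Finset

theorem monotoneOn_choose_Iic_half (N : ℕ) : MonotoneOn N.choose (Set.Iic (N / 2)) :=
  monotoneOn_of_le_succ Set.ordConnected_Iic fun _ _ _ hj ↦
    Nat.choose_le_succ_of_lt_half_left hj

theorem choose_le_choose_of_le_of_add_le {N i j : ℕ} (hij : i ≤ j) (hN : i + j ≤ N) :
    N.choose i ≤ N.choose j := by
  rcases le_or_gt j (N / 2) with hj | hj
  · exact monotoneOn_choose_Iic_half N (hij.trans hj) hj hij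
  · rw [← Nat.choose_symm (Nat.le_of_add_left_le hN)]
    exact monotoneOn_choose_Iic_half N
      (Set.mem_Iic.mpr (by lia)) (Set.mem_Iic.mpr (by lia)) (by lia)

theorem card_filter_powerset_card_lt {α : Type*} (s : Finset α) (k : ℕ) :
    #{t ∈ s.powerset | #t < k} = ∑ j ∈ range k, (#s).choose j := by
  rw [card_eq_sum_card_fiberwise (f := card) (t := range k) fun t ht ↦ by simp_all]
  refine sum_congr rfl fun j hj ↦ ?_
  rw [filter_filter, ← card_powersetCard, powersetCard_eq_filter]
  exact congrArg card (filter_congr fun t _ ↦ by grind)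

variable {V : Type*} [DecidableEq V]

theorem card_sdiff_le_max_zero_sub_iff (W X : Finset V) (m : ℕ) :
    (#(W \ X) : ℤ) ≤ max 0 ((m : ℤ) - #X) ↔ W ⊆ X ∨ #(W ∪ X) ≤ m := by
  rw [← sdiff_eq_empty_iff_subset, ← card_eq_zero, ← card_sdiff_add_card W X]
  lia

variable [Fintype V]

theorem card_filter_subset (W : Finset V) :
    #{X | W ⊆ X} = 2 ^ (Fintype.card V - #W) := by
  rw [← card_univ, ← card_Icc_finset (subset_univ W)]
  congr 1
  ext X
  simp

theorem card_filter_card_union_le (W : Finset V) (m : ℕ) :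
    #{X | #(W ∪ X) ≤ m} =
      2 ^ #W * ∑ j ∈ range (m + 1 - #W), (Fintype.card V - #W).choose j := by
  have card_union_eq (X : Finset V) : #(W ∪ X) = #W + #(X \ W) := by
    rw [union_comm, ← card_sdiff_add_card, add_comm]
  have parts_union {A B : Finset V} (hA : A ⊆ W) (hB : B ⊆ Wᶜ) :
      (A ∪ B) ∩ W = A ∧ (A ∪ B) \ W = B := by
    constructor <;> grind [mem_compl]
  rw [← card_powerset, ← card_compl, ← card_filter_powerset_card_lt, ← card_product]
  refine card_bij' (fun X _ ↦ (X ∩ W, X \ W)) (fun p _ ↦ p.1 ∪ p.2) ?_ ?_ ?_ ?_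
  · intro X hX
    have hcard : #W + #(X \ W) ≤ m := by simpa [card_union_eq] using hX
    have hcompl : X \ W ⊆ Wᶜ := by grind [mem_compl]
    simp only [mem_product, mem_powerset, mem_filter]
    exact ⟨inter_subset_right, hcompl, by lia⟩
  · rintro ⟨A, B⟩ hAB
    simp only [mem_product, mem_powerset, mem_filter] at hAB
    obtain ⟨hA, hB, hcard⟩ := hAB
    simp only [mem_filter_univ, card_union_eq, (parts_union hA hB).2]
    lia
  · intro X _
    rw [union_comm, sdiff_union_inter]
  · rintro ⟨A, B⟩ hAB
    simp only [mem_product, mem_powerset, mem_filter] at hAB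
    obtain ⟨hA, hB, -⟩ := hAB
    exact Prod.ext_iff.mpr (parts_union hA hB)

theorem count_accepted_sets_le_general (W : Finset V) {m : ℕ} (hm : 2 * m ≤ Fintype.card V) :
    {X : Finset V | (#(W \ X) : ℤ) ≤ max 0 ((m : ℤ) - #X)}.ncard ≤
      2 ^ (Fintype.card V - #W) +
        (m + 1 - #W) * 2 ^ #W * (Fintype.card V - #W).choose m := by
  have choose_le : ∀ j ∈ range (m + 1 - #W),
      (Fintype.card V - #W).choose j ≤ (Fintype.card V - #W).choose m := fun j hj ↦ by
    rw [mem_range] at hj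
    exact choose_le_choose_of_le_of_add_le (by lia) (by lia)
  calc
    _ = #{X | W ⊆ X ∨ #(W ∪ X) ≤ m} := by
      simp_rw [card_sdiff_le_max_zero_sub_iff]
      rw [← Set.ncard_coe_finset, coe_filter_univ]
    _ ≤ #{X | W ⊆ X} + #{X | #(W ∪ X) ≤ m} := by
      rw [filter_or]
      exact card_union_le _ _
    _ = 2 ^ (Fintype.card V - #W) +
          2 ^ #W * ∑ j ∈ range (m + 1 - #W), (Fintype.card V - #W).choose j := by
      rw [card_filter_subset, card_filter_card_union_le]
    _ ≤ 2 ^ (Fintype.card V - #W) +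
          2 ^ #W * ((m + 1 - #W) * (Fintype.card V - #W).choose m) := by
      gcongr
      simpa using sum_le_card_nsmul _ _ _ choose_le
    _ = _ := by ring

end AcceptedSets

/-- Let `V` be a finite set with `|V| = n`, `n` even, and `W ⊆ V` with
`|W| ≤ n/2`. Then the number of subsets `X ⊆ V` satisfying
`|W \ X| ≤ max(0, n/2 − |X|)` is at most
`2^(n − |W|) + Σ_{j=0}^{n/2 − |W|} C(n, j) + (n+1)² · 2^(|W|) · C(n − |W|, n/2)`. -/
theorem count_accepted_sets_le {V : Type*} [Fintype V] [DecidableEq V]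
    (n : ℕ) (hn : Fintype.card V = n) (heven : Even n)
    (W : Finset V) (hW : W.card ≤ n / 2) :
    {X : Finset V | ((W \ X).card : ℤ) ≤ max 0 ((n : ℤ) / 2 - (X.card : ℤ))}.ncard ≤
      2 ^ (n - W.card) + ∑ j ∈ Finset.range (n / 2 - W.card + 1), Nat.choose n j
        + (n + 1) ^ 2 * 2 ^ W.card * Nat.choose (n - W.card) (n / 2) := by
  subst hn
  have hfactor : Fintype.card V / 2 + 1 - W.card ≤ (Fintype.card V + 1) ^ 2 :=
    le_trans (by lia) (Nat.le_self_pow two_ne_zero (Fintype.card V + 1))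
  calc _ ≤ _ := count_accepted_sets_le_general W (Nat.mul_div_le (Fintype.card V) 2)
    _ ≤ _ := by gcongr; exact Nat.le_add_right _ _
end
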